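/- Fix a probability vector μ = (μ_1,…,μ_r) with positive entries, integers 1 ≤ K_1 ≤ … ≤ K_r ≤ P/2, and α ∈ (0,1). For any 2 ≤ ℓ ≤ n, the probability that the subgraph of G(n; μ, K, P, α) induced on the vertices {v_1,…,v_ℓ} is connected is at most min{1, ℓ^{ℓ−2} (α p_rr)^{ℓ−1}}, where p_rr = 1 − C(P−K_r, K_r)/C(P, K_r). -/

import Mathlib

open Filter

/-- Probability that a uniformly random `b`-subset of a `P`-set avoids a fixed `a`-subset. -/
noncomputable def avoidProb (P a b : ℕ) : ℝ := ((P - a).choose b : ℝ) / (P.choose b : ℝ)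

/-- `p_{ab}` : probability that independent uniformly random key rings of sizes
`a` and `b` (from a pool of size `P`) intersect. -/
noncomputable def pEdge (P a b : ℕ) : ℝ := 1 - avoidProb P a b

/-- `λ_i` : mean edge probability of a class-`i` node in the inhomogeneous random key graph. -/
noncomputable def lamb {r : ℕ} (μ : Fin (r + 1) → ℝ) (K : Fin (r + 1) → ℕ) (P : ℕ)
    (i : Fin (r + 1)) : ℝ :=
  ∑ j, μ j * pEdge P (K i) (K j)

/-- A configuration of the model: a class for each vertex, a key ring for each vertex,
and an on/off state for each (unordered) channel. -/
abbrev Config (n r P : ℕ) := (Fin n → Fin (r + 1)) × (Fin n → Finset (Fin P)) × (Sym2 (Fin n) → Bool)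

/-- Probability weight of a configuration: classes are i.i.d. with law `μ`; given its class `i`,
a vertex's key ring is uniform among the `C(P, K i)` subsets of size `K i`; channels over
distinct pairs are i.i.d. Bernoulli(`α`) (diagonal channel variables are forced to `false`). -/
noncomputable def wt {n r P : ℕ} (μ : Fin (r + 1) → ℝ) (K : Fin (r + 1) → ℕ) (α : ℝ)
    (c : Config n r P) : ℝ :=
  (∏ x : Fin n, μ (c.1 x)) *
    (∏ x : Fin n, if (c.2.1 x).card = K (c.1 x) then ((P.choose (K (c.1 x)) : ℝ))⁻¹ else 0) *
    (∏ e : Sym2 (Fin n),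
      if e.IsDiag then (if c.2.2 e then 0 else 1) else (if c.2.2 e then α else 1 - α))

open Classical in
/-- Probability of an event under the heterogeneous key predistribution model
with on/off channels. -/
noncomputable def pr {n r P : ℕ} (μ : Fin (r + 1) → ℝ) (K : Fin (r + 1) → ℕ) (α : ℝ)
    (E : Config n r P → Prop) : ℝ :=
  ∑ c : Config n r P, if E c then wt μ K α c else 0

/-- Two vertices are adjacent iff their key rings intersect and the channel between them is on. -/
def Adj {n r P : ℕ} (c : Config n r P) (x y : Fin n) : Prop :=
  x ≠ y ∧ ((c.2.1 x) ∩ (c.2.1 y)).Nonempty ∧ c.2.2 s(x, y) = true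

/-- The random graph `G(n; μ, K, P, α)` as a simple graph. -/
def graphOf {n r P : ℕ} (c : Config n r P) : SimpleGraph (Fin n) :=
  SimpleGraph.fromRel (fun x y => ((c.2.1 x) ∩ (c.2.1 y)).Nonempty ∧ c.2.2 s(x, y) = true)

/-- A vertex is isolated if it has no neighbours. -/
def Isolated {n r P : ℕ} (c : Config n r P) (x : Fin n) : Prop := ∀ y, ¬ Adj c x y

/-- The graph has no isolated nodes. -/
def NoIsolatedNodes {n r P : ℕ} (c : Config n r P) : Prop := ∀ x, ¬ Isolated c x

/-!
A connected graph on a vertex set `s` contains a spanning tree, which becomes a parent function once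
a root `o ∈ s` is fixed (each vertex picks a neighbour closer to `o`), and by Cayley's formula there
are `|s| ^ (|s| - 2)` candidates. Cayley's formula is proved for forests with prescribed roots, by
sorting them according to the set of children of the roots: this set takes over as the set of roots
once the old roots are removed, and the binomial theorem sums up the resulting recursion.

By the union bound it remains to see that the edges of a fixed tree are all present with probability
at most `(α p_rr) ^ (|s| - 1)`. The channels contribute `α` per edge. Given the classes, the rings
are independent, and removing the leaves one at a time contributes at most `p_rr` per edge: a ring
of size `i` meets a fixed ring of size `j` with a probability that increases with `i` and `j`.
-/

section RootedForests

open Finset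

variable {V : Type*}

/-- `p` is the parent function of a forest on `A ∪ B` whose set of roots is `A`. Acyclicity is
witnessed by a rank that decreases towards the roots; off `B`, where parents are meaningless, `p` is
the identity, so that distinct functions are distinct forests. -/
structure IsRootedForest (A B : Finset V) (p : V → V) : Prop where
  parent_mem : ∀ v ∈ B, p v ∈ A ∨ p v ∈ B
  apply_of_notMem : ∀ v ∉ B, p v = v
  exists_rank : ∃ ρ : V → ℕ, ∀ v ∈ B, ρ (p v) < ρ v

namespace IsRootedForest

variable {A B : Finset V} {p : V → V}

lemma parent_ne (hp : IsRootedForest A B p) {v : V} (hv : v ∈ B) : p v ≠ v := by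
  obtain ⟨ρ, hρ⟩ := hp.exists_rank
  exact fun h => (hρ v hv).ne (congrArg ρ h)

lemma injOn_edge (hp : IsRootedForest A B p) : Set.InjOn (fun v => s(v, p v)) B := by
  obtain ⟨ρ, hρ⟩ := hp.exists_rank
  intro v hv w hw h
  rcases Sym2.eq_iff.mp h with ⟨hvw, -⟩ | ⟨hvw, hwv⟩
  · exact hvw
  · have hlt_v : ρ w < ρ v := hwv ▸ hρ v hv
    have hlt_w : ρ v < ρ w := hvw ▸ hρ w hw
    exact absurd hlt_v hlt_w.asymm

lemma eq_empty_of_no_roots (hp : IsRootedForest ∅ B p) : B = ∅ := by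
  obtain ⟨ρ, hρ⟩ := hp.exists_rank
  by_contra hB
  obtain ⟨v, hv, hmin⟩ := B.exists_min_image ρ (nonempty_iff_ne_empty.mpr hB)
  have hpv : p v ∈ B := (hp.parent_mem v hv).resolve_left (notMem_empty _)
  exact (hρ v hv).not_ge (hmin _ hpv)

variable [DecidableEq V] {S : Finset V}

lemma parent_mem_of_subset (hp : IsRootedForest S (B \ S) p) (hSB : S ⊆ B) {v : V}
    (hv : v ∈ B \ S) : p v ∈ B :=
  (hp.parent_mem v hv).elim (@hSB _) fun h => (mem_sdiff.mp h).1

lemma piecewise {g q : V → V} (hAB : Disjoint A B) (hSB : S ⊆ B) (hg : ∀ v ∈ S, g v ∈ A)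
    (hq : IsRootedForest S (B \ S) q) : IsRootedForest A B (S.piecewise g q) := by
  obtain ⟨ρ, hρ⟩ := hq.exists_rank
  refine ⟨fun v hv => ?_, fun v hv => ?_, fun v => if v ∈ A then 0 else ρ v + 1, fun v hv => ?_⟩
  · by_cases hvS : v ∈ S
    · exact .inl (by simpa only [piecewise_eq_of_mem _ _ _ hvS] using hg v hvS)
    · rw [piecewise_eq_of_notMem _ _ _ hvS]
      exact .inr (hq.parent_mem_of_subset hSB (mem_sdiff.mpr ⟨hv, hvS⟩))
  · rw [piecewise_eq_of_notMem _ _ _ fun h => hv (hSB h)]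
    exact hq.apply_of_notMem v fun h => hv (mem_sdiff.mp h).1
  · have hvA : v ∉ A := disjoint_right.mp hAB hv
    by_cases hvS : v ∈ S
    · simp [hvS, hg v hvS, hvA]
    · have hv' : v ∈ B \ S := mem_sdiff.mpr ⟨hv, hvS⟩
      simp [hvS, hvA, disjoint_right.mp hAB (hq.parent_mem_of_subset hSB hv'), hρ v hv']

lemma children_piecewise {g q : V → V} (hAB : Disjoint A B) (hSB : S ⊆ B)
    (hg : ∀ v ∈ S, g v ∈ A) (hq : IsRootedForest S (B \ S) q) :
    {v ∈ B | S.piecewise g q v ∈ A} = S := by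
  ext v
  rw [mem_filter]
  by_cases hvS : v ∈ S
  · simp [hvS, hSB hvS, hg v hvS]
  · rw [piecewise_eq_of_notMem _ _ _ hvS]
    refine iff_of_false (fun ⟨hvB, hqA⟩ => ?_) hvS
    exact disjoint_left.mp hAB hqA (hq.parent_mem_of_subset hSB (mem_sdiff.mpr ⟨hvB, hvS⟩))

lemma cut_roots (hp : IsRootedForest A B p) (hS : {v ∈ B | p v ∈ A} = S) :
    IsRootedForest S (B \ S) (S.piecewise id p) := by
  obtain ⟨ρ, hρ⟩ := hp.exists_rank
  refine ⟨fun v hv => ?_, fun v hv => ?_, ρ, fun v hv => ?_⟩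
  · obtain ⟨hvB, hvS⟩ := mem_sdiff.mp hv
    have hpA : p v ∉ A := fun h => hvS (hS ▸ mem_filter.mpr ⟨hvB, h⟩)
    rw [piecewise_eq_of_notMem _ _ _ hvS]
    exact (em _).imp_right fun h => mem_sdiff.mpr ⟨(hp.parent_mem v hvB).resolve_left hpA, h⟩
  · by_cases hvS : v ∈ S
    · exact piecewise_eq_of_mem _ _ _ hvS
    · rw [piecewise_eq_of_notMem _ _ _ hvS]
      exact hp.apply_of_notMem v fun h => hv (mem_sdiff.mpr ⟨h, hvS⟩)
  · obtain ⟨hvB, hvS⟩ := mem_sdiff.mp hv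
    rw [piecewise_eq_of_notMem _ _ _ hvS]
    exact hρ v hvB

end IsRootedForest

lemma exists_adj_dist_lt {G : SimpleGraph V} (hG : G.Connected) {v o : V} (hv : v ≠ o) :
    ∃ u, G.Adj v u ∧ G.dist u o < G.dist v o := by
  obtain ⟨w, hw⟩ := hG.exists_walk_length_eq_dist v o
  cases w with
  | nil => exact absurd rfl hv
  | @cons _ u _ hadj w =>
    refine ⟨u, hadj, ?_⟩
    rw [← hw, SimpleGraph.Walk.length_cons]
    exact Nat.lt_succ_of_le (SimpleGraph.dist_le w)

lemma exists_isRootedForest_of_connected [DecidableEq V] {G : SimpleGraph V} {s : Finset V} {o : V}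
    (ho : o ∈ s) (hG : (G.induce (s : Set V)).Connected) :
    ∃ p, IsRootedForest {o} (s.erase o) p ∧ ∀ v ∈ s.erase o, G.Adj v (p v) := by
  let ρ : V → ℕ := fun v => if h : v ∈ s then (G.induce (s : Set V)).dist ⟨v, h⟩ ⟨o, ho⟩ else 0
  have hparent : ∀ v ∈ s.erase o, ∃ u, u ∈ s ∧ G.Adj v u ∧ ρ u < ρ v := by
    intro v hv
    obtain ⟨hvo, hvs⟩ := mem_erase.mp hv
    obtain ⟨⟨u, hus⟩, hadj, hlt⟩ := exists_adj_dist_lt hG (v := ⟨v, hvs⟩) (o := ⟨o, ho⟩)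
      fun h => hvo (congrArg Subtype.val h)
    exact ⟨u, hus, hadj, by simpa only [ρ, dif_pos hvs, dif_pos (mem_coe.mp hus)] using hlt⟩
  have : Nonempty V := ⟨o⟩
  choose! p hps hadj hρ using hparent
  have hp : ∀ v ∈ s.erase o, (s.erase o).piecewise p id v = p v := fun v hv =>
    piecewise_eq_of_mem _ _ _ hv
  refine ⟨(s.erase o).piecewise p id, ⟨fun v hv => ?_, fun v hv => ?_, ρ, fun v hv => ?_⟩,
    fun v hv => ?_⟩
  · rw [hp v hv, mem_singleton, mem_erase]
    exact (em _).imp_right fun h => ⟨h, hps v hv⟩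
  · exact piecewise_eq_of_notMem _ _ _ hv
  · exact (hp v hv).symm ▸ hρ v hv
  · exact (hp v hv).symm ▸ hadj v hv

/-- The number of forests on `a + b` labelled vertices rooted at `a` prescribed vertices, which is
`a * (a + b) ^ (b - 1)` unless `b = 0`. -/
def forestCount (a : ℕ) : ℕ → ℕ
  | 0 => 1
  | b + 1 => a * (a + b + 1) ^ b

lemma forestCount_one_left (b : ℕ) : forestCount 1 b = (b + 1) ^ (b - 1) := by
  cases b with
  | zero => rfl
  | succ b => rw [forestCount, one_mul, add_comm 1 b, Nat.add_sub_cancel]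

lemma forestCount_eq_sum (a b : ℕ) :
    forestCount a b = ∑ s ∈ range (b + 1), b.choose s * (a ^ s * forestCount s (b - s)) := by
  cases b with
  | zero => simp [forestCount]
  | succ b =>
    have hterm : ∀ j ∈ range (b + 1),
        (b + 1).choose (j + 1) * (a ^ (j + 1) * forestCount (j + 1) (b + 1 - (j + 1))) =
          a * (a ^ j * (b + 1) ^ (b - j) * b.choose j) := by
      intro j hj
      have hchoose : (b + 1).choose (j + 1) * (j + 1) = (b + 1) * b.choose j :=
        (Nat.add_one_mul_choose_eq b j).symm
      obtain ⟨d, rfl⟩ := Nat.exists_eq_add_of_le (mem_range_succ_iff.mp hj)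
      rw [Nat.add_sub_add_right, Nat.add_sub_cancel_left]
      cases d with
      | zero => simp [forestCount, pow_succ, mul_comm]
      | succ d =>
        calc _ = ((j + (d + 1) + 1).choose (j + 1) * (j + 1)) * a ^ (j + 1) *
              (j + (d + 1) + 1) ^ d := by rw [forestCount]; ring
          _ = _ := by rw [hchoose]; ring
    rw [sum_range_succ', sum_congr rfl hterm, ← mul_sum, forestCount, add_assoc a b 1, add_pow]
    simp [forestCount]

variable [Fintype V] [DecidableEq V]

open Classical in
/-- The forests on `A ∪ B` with set of roots `A`, as a finite set of parent functions. -/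
noncomputable def rootedForests (A B : Finset V) : Finset (V → V) :=
  {p | IsRootedForest A B p}

lemma mem_rootedForests {A B : Finset V} {p : V → V} :
    p ∈ rootedForests A B ↔ IsRootedForest A B p := by
  simp [rootedForests]

lemma rootedForests_empty_right (A : Finset V) : rootedForests A ∅ = {id} := by
  ext p
  rw [mem_rootedForests, mem_singleton]
  refine ⟨fun hp => funext fun v => hp.apply_of_notMem v (notMem_empty v), ?_⟩
  rintro rfl
  exact ⟨by simp, by simp, by simp⟩

lemma rootedForests_empty_left {B : Finset V} (hB : B.Nonempty) : rootedForests ∅ B = ∅ :=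
  eq_empty_of_forall_notMem fun _ hp =>
    hB.ne_empty (mem_rootedForests.mp hp).eq_empty_of_no_roots

lemma card_rootedForests_filter_children {A B S : Finset V} (hAB : Disjoint A B) (hSB : S ⊆ B) :
    #{p ∈ rootedForests A B | {v ∈ B | p v ∈ A} = S} = #A ^ #S * #(rootedForests S (B \ S)) := by
  let attachments : Finset (V → V) := Fintype.piFinset (S.piecewise (fun _ => A) singleton)
  have mem_attachments {g : V → V} :
      g ∈ attachments ↔ (∀ v ∈ S, g v ∈ A) ∧ ∀ v ∉ S, g v = v := by
    rw [Fintype.mem_piFinset, ← forall_and]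
    refine forall_congr' fun v => ?_
    by_cases hv : v ∈ S <;> simp [hv]
  have card_attachments : #attachments = #A ^ #S := by
    simp [attachments, Fintype.card_piFinset, piecewise, apply_ite]
  rw [← card_attachments, ← card_product]
  refine card_nbij' (fun p => (S.piecewise p id, S.piecewise id p)) (fun f => S.piecewise f.1 f.2)
    (fun p hp => ?_) (fun ⟨g, q⟩ hgq => ?_) (fun p _ => ?_) (fun ⟨g, q⟩ hgq => ?_)
  · obtain ⟨hp, hS⟩ := mem_filter.mp hp
    refine mem_product.mpr ⟨mem_attachments.mpr ⟨fun v hv => ?_, fun v hv => ?_⟩,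
      mem_rootedForests.mpr ((mem_rootedForests.mp hp).cut_roots hS)⟩
    · have hvS : v ∈ {v ∈ B | p v ∈ A} := hS ▸ hv
      simpa only [piecewise_eq_of_mem _ _ _ hv] using (mem_filter.mp hvS).2
    · exact piecewise_eq_of_notMem _ _ _ hv
  · obtain ⟨hg, hq⟩ := mem_product.mp hgq
    have hg := (mem_attachments.mp hg).1
    have hq := mem_rootedForests.mp hq
    exact mem_filter.mpr ⟨mem_rootedForests.mpr (hq.piecewise hAB hSB hg),
      hq.children_piecewise hAB hSB hg⟩
  · ext v
    by_cases hv : v ∈ S <;> simp [hv]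
  · obtain ⟨hg, hq⟩ := mem_product.mp hgq
    refine Prod.ext (funext fun v => ?_) (funext fun v => ?_) <;> by_cases hv : v ∈ S
    · simp [hv]
    · simpa [hv] using ((mem_attachments.mp hg).2 v hv).symm
    · have hvB : v ∉ B \ S := fun h => (mem_sdiff.mp h).2 hv
      simpa [hv] using ((mem_rootedForests.mp hq).apply_of_notMem v hvB).symm
    · simp [hv]

theorem card_rootedForests {A B : Finset V} (hAB : Disjoint A B) :
    #(rootedForests A B) = forestCount #A #B := by
  induction B using Finset.strongInduction generalizing A with
  | H B ih =>
  rcases B.eq_empty_or_nonempty with rfl | hB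
  · simp [rootedForests_empty_right, forestCount]
  have hfiber : ∀ S ∈ B.powerset, #{p ∈ rootedForests A B | {v ∈ B | p v ∈ A} = S} =
      #A ^ #S * forestCount #S (#B - #S) := by
    intro S hS
    have hSB := mem_powerset.mp hS
    rw [card_rootedForests_filter_children hAB hSB]
    rcases S.eq_empty_or_nonempty with rfl | hne
    · obtain ⟨b, hb⟩ := Nat.exists_eq_add_one.mpr hB.card_pos
      simp [rootedForests_empty_left hB, hb, forestCount]
    · rw [ih _ (sdiff_ssubset hSB hne) disjoint_sdiff, card_sdiff_of_subset hSB]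
  calc #(rootedForests A B)
      = ∑ S ∈ B.powerset, #{p ∈ rootedForests A B | {v ∈ B | p v ∈ A} = S} :=
        card_eq_sum_card_fiberwise fun _ _ => mem_powerset.mpr (filter_subset _ _)
    _ = ∑ S ∈ B.powerset, #A ^ #S * forestCount #S (#B - #S) := sum_congr rfl hfiber
    _ = forestCount #A #B := by
      rw [sum_powerset_apply_card fun s => #A ^ s * forestCount s (#B - s), forestCount_eq_sum]
      simp only [smul_eq_mul]

theorem card_rootedForests_singleton_erase {s : Finset V} {o : V} (ho : o ∈ s) :
    #(rootedForests {o} (s.erase o)) = #s ^ (#s - 2) := by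
  rw [card_rootedForests (disjoint_singleton_left.mpr (notMem_erase o s)), card_singleton,
    forestCount_one_left, card_erase_add_one ho, card_erase_of_mem ho, Nat.sub_sub]

end RootedForests

section IndependentSamples

open Finset

variable {ι : Type*} [Fintype ι] [DecidableEq ι] {X : ι → Type*}

lemma prod_apply_update_mul (ν : ∀ i, X i → ℝ) (σ : ∀ i, X i) (a : ι) (x : X a) :
    (∏ i, ν i (Function.update σ a x i)) * ν a (σ a) = (∏ i, ν i (σ i)) * ν a x := by
  have hrest : ∏ i ∈ univ.erase a, ν i (Function.update σ a x i) = ∏ i ∈ univ.erase a, ν i (σ i) :=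
    prod_congr rfl fun i hi => by rw [Function.update_of_ne (ne_of_mem_erase hi)]
  rw [← mul_prod_erase _ _ (mem_univ a), ← mul_prod_erase _ (fun i => ν i (σ i)) (mem_univ a),
    hrest, Function.update_self]
  ring

variable [∀ i, Fintype (X i)]

open Classical in
/-- The probability of the event `E` when the coordinates of `σ` are independent and the `i`-th one
takes the value `x` with probability `ν i x`. -/
noncomputable def indepProb (ν : ∀ i, X i → ℝ) (E : (∀ i, X i) → Prop) : ℝ :=
  ∑ σ, if E σ then ∏ i, ν i (σ i) else 0

open Classical in
lemma indepProb_forall (ν : ∀ i, X i → ℝ) (E : ∀ i, X i → Prop) :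
    indepProb ν (fun σ => ∀ i, E i (σ i)) = ∏ i, ∑ x, if E i x then ν i x else 0 := by
  rw [indepProb, Fintype.prod_sum]
  refine Fintype.sum_congr _ _ fun σ => ?_
  rw [prod_ite_zero]
  simp only [mem_univ, true_imp_iff]
  congr

lemma indepProb_true {ν : ∀ i, X i → ℝ} (hν : ∀ i, ∑ x, ν i x = 1) :
    indepProb ν (fun _ => True) = 1 := by
  simpa [hν] using indepProb_forall ν fun _ _ => True

lemma sum_prod_mul_eq_sum_resample {ν : ∀ i, X i → ℝ} {a : ι} (hν : ∑ x, ν a x = 1)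
    (g : (∀ i, X i) → ℝ) :
    ∑ σ, (∏ i, ν i (σ i)) * g σ =
      ∑ σ, (∏ i, ν i (σ i)) * ∑ x, ν a x * g (Function.update σ a x) := by
  -- exchanging the coordinate `a` of `σ` with the fresh sample `x` preserves weights
  have hinv : Function.Involutive
      fun q : (∀ i, X i) × X a => (Function.update q.1 a q.2, q.1 a) := by
    rintro ⟨σ, x⟩
    simp
  calc ∑ σ, (∏ i, ν i (σ i)) * g σ
      = ∑ q : (∀ i, X i) × X a, (∏ i, ν i (q.1 i)) * ν a q.2 * g q.1 := by
        rw [Fintype.sum_prod_type]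
        exact Fintype.sum_congr _ _ fun σ => by
          dsimp only
          rw [← sum_mul, ← mul_sum, hν, mul_one]
    _ = ∑ q : (∀ i, X i) × X a,
          (∏ i, ν i (q.1 i)) * ν a q.2 * g (Function.update q.1 a q.2) := by
        refine Fintype.sum_equiv hinv.toPerm _ _ fun ⟨σ, x⟩ => ?_
        simp only [Function.Involutive.coe_toPerm, Function.update_idem, Function.update_eq_self,
          prod_apply_update_mul]
    _ = ∑ σ, (∏ i, ν i (σ i)) * ∑ x, ν a x * g (Function.update σ a x) := by
        rw [Fintype.sum_prod_type]
        exact Fintype.sum_congr _ _ fun σ => by simp only [mul_sum, mul_assoc]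

open Classical in
lemma indepProb_and_le_mul {ν : ∀ i, X i → ℝ} (hν0 : ∀ i x, 0 ≤ ν i x) {a : ι}
    (hν : ∑ x, ν a x = 1) {D E : (∀ i, X i) → Prop}
    (hE : ∀ σ x, E (Function.update σ a x) ↔ E σ) {q : ℝ}
    (hD : ∀ σ, (∀ i, ν i (σ i) ≠ 0) → ∑ x, (if D (Function.update σ a x) then ν a x else 0) ≤ q) :
    indepProb ν (fun σ => D σ ∧ E σ) ≤ q * indepProb ν E := by
  have hfresh : ∀ σ, ∑ x, ν a x *
      (if D (Function.update σ a x) ∧ E (Function.update σ a x) then 1 else 0) =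
        if E σ then ∑ x, (if D (Function.update σ a x) then ν a x else 0) else 0 := fun σ => by
    by_cases hEσ : E σ <;> simp [hE, hEσ]
  calc indepProb ν (fun σ => D σ ∧ E σ)
      = ∑ σ, (∏ i, ν i (σ i)) * (if D σ ∧ E σ then 1 else 0) :=
        Fintype.sum_congr _ _ fun σ => by
          simp only [mul_ite, mul_one, mul_zero]
          congr
    _ = ∑ σ, (∏ i, ν i (σ i)) *
          (if E σ then ∑ x, (if D (Function.update σ a x) then ν a x else 0) else 0) := by
        rw [sum_prod_mul_eq_sum_resample hν]
        simp only [hfresh]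
    _ ≤ ∑ σ, q * (if E σ then ∏ i, ν i (σ i) else 0) := by
        refine sum_le_sum fun σ _ => ?_
        split_ifs
        · by_cases hσ : ∀ i, ν i (σ i) ≠ 0
          · rw [mul_comm q]
            exact mul_le_mul_of_nonneg_left (hD σ hσ) (prod_nonneg fun i _ => hν0 i _)
          · obtain ⟨i, hi⟩ := Classical.not_forall_not.mp hσ
            rw [prod_eq_zero (f := fun i => ν i (σ i)) (mem_univ i) hi, zero_mul, mul_zero]
        · rw [mul_zero, mul_zero]
    _ = q * indepProb ν E := by rw [← mul_sum, indepProb]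

open Classical in
lemma indepProb_forest_le {Y : Type*} [Fintype Y] {ν : ι → Y → ℝ} (hν0 : ∀ i y, 0 ≤ ν i y)
    (hν : ∀ i, ∑ y, ν i y = 1) {R : Y → Y → Prop} {q : ℝ} (hq : 0 ≤ q)
    (hR : ∀ i j z, ν j z ≠ 0 → ∑ y, (if R y z then ν i y else 0) ≤ q)
    {B : Finset ι} {p : ι → ι} {ρ : ι → ℕ} (hρ : ∀ v ∈ B, ρ (p v) < ρ v) :
    indepProb ν (fun σ => ∀ v ∈ B, R (σ v) (σ (p v))) ≤ q ^ #B := by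
  induction B using Finset.induction_on_max_value ρ with
  | empty => simp [indepProb_true hν]
  | insert a B haB hmax ih =>
    have hρB : ∀ v ∈ B, ρ (p v) < ρ v := fun v hv => hρ v (mem_insert_of_mem hv)
    have hpa : p a ≠ a := fun h => (hρ a (mem_insert_self a B)).ne (congrArg ρ h)
    -- a vertex of maximal rank is a leaf, so its sample can be integrated out
    have hleaf : ∀ v ∈ B, p v ≠ a := fun v hv h => (h ▸ (hρB v hv).trans_le (hmax v hv)).false
    calc indepProb ν (fun σ => ∀ v ∈ insert a B, R (σ v) (σ (p v)))
        = indepProb ν (fun σ => R (σ a) (σ (p a)) ∧ ∀ v ∈ B, R (σ v) (σ (p v))) := by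
          simp only [forall_mem_insert]
      _ ≤ q * indepProb ν (fun σ => ∀ v ∈ B, R (σ v) (σ (p v))) := by
          refine indepProb_and_le_mul hν0 (hν a) (fun σ x => forall₂_congr fun v hv => ?_) ?_
          · rw [Function.update_of_ne (ne_of_mem_of_not_mem hv haB),
              Function.update_of_ne (hleaf v hv)]
          · intro σ hσ
            simpa only [Function.update_self, Function.update_of_ne hpa] using hR a (p a) _ (hσ _)
      _ ≤ q * q ^ #B := mul_le_mul_of_nonneg_left (ih hρB) hq
      _ = q ^ #(insert a B) := by rw [card_insert_of_notMem haB, pow_succ']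

end IndependentSamples

section KeyRings

open Finset

lemma avoidProb_anti_left {P a a' : ℕ} (h : a ≤ a') (b : ℕ) :
    avoidProb P a' b ≤ avoidProb P a b := by
  unfold avoidProb
  gcongr

lemma avoidProb_comm {P a b : ℕ} (ha : a ≤ P) (hb : b ≤ P) : avoidProb P a b = avoidProb P b a := by
  -- both sides count the ordered pairs of disjoint subsets of sizes `a` and `b`
  have hpairs : P.choose a * (P - a).choose b = P.choose b * (P - b).choose a := by
    have h₁ := Nat.choose_mul (n := P) (Nat.le_add_right a b)
    have h₂ := Nat.choose_mul (n := P) (Nat.le_add_left b a)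
    rw [Nat.add_sub_cancel_left] at h₁
    rw [Nat.add_sub_cancel] at h₂
    rw [← h₁, ← h₂, Nat.choose_symm_add]
  have hPa : (P.choose a : ℝ) ≠ 0 := mod_cast (Nat.choose_pos ha).ne'
  have hPb : (P.choose b : ℝ) ≠ 0 := mod_cast (Nat.choose_pos hb).ne'
  rw [avoidProb, avoidProb, div_eq_div_iff hPb hPa, mul_comm, mul_comm _ (P.choose b : ℝ)]
  exact_mod_cast hpairs

lemma pEdge_mono {P a a' b b' : ℕ} (ha : a ≤ a') (hb : b ≤ b') (ha' : a' ≤ P) (hb' : b' ≤ P) :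
    pEdge P a b ≤ pEdge P a' b' := by
  refine sub_le_sub_left ?_ 1
  calc avoidProb P a' b' ≤ avoidProb P a b' := avoidProb_anti_left ha b'
    _ = avoidProb P b' a := avoidProb_comm (ha.trans ha') hb'
    _ ≤ avoidProb P b a := avoidProb_anti_left hb a
    _ = avoidProb P a b := avoidProb_comm (hb.trans hb') (ha.trans ha')

lemma pEdge_nonneg (P a b : ℕ) : 0 ≤ pEdge P a b :=
  sub_nonneg.mpr <| div_le_one_of_le₀ (mod_cast Nat.choose_le_choose b (Nat.sub_le P a))
    (Nat.cast_nonneg _)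

/-- The law of a key ring of a vertex whose class has rings of size `k`: uniform on the `k`-subsets
of the pool. -/
noncomputable def ringLaw (P k : ℕ) (S : Finset (Fin P)) : ℝ :=
  if #S = k then (P.choose k : ℝ)⁻¹ else 0

lemma ringLaw_nonneg {P k : ℕ} (S : Finset (Fin P)) : 0 ≤ ringLaw P k S := by
  unfold ringLaw
  positivity

lemma card_eq_of_ringLaw_ne_zero {P k : ℕ} {S : Finset (Fin P)} (hS : ringLaw P k S ≠ 0) :
    #S = k :=
  of_not_not fun h => hS (if_neg h)

lemma sum_ringLaw {P k : ℕ} (hk : k ≤ P) : ∑ S, ringLaw P k S = 1 := by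
  have hpos : (P.choose k : ℝ) ≠ 0 := mod_cast (Nat.choose_pos hk).ne'
  simp_rw [ringLaw]
  rw [← sum_filter, sum_const, univ_filter_card_eq, card_powersetCard, card_fin,
    nsmul_eq_mul, mul_inv_cancel₀ hpos]

lemma sum_ringLaw_disjoint (P k : ℕ) (A : Finset (Fin P)) :
    ∑ S, (if Disjoint S A then ringLaw P k S else 0) = avoidProb P #A k := by
  have hset : ({S | Disjoint S A ∧ #S = k} : Finset (Finset (Fin P))) = powersetCard k Aᶜ := by
    ext S
    simp [mem_powersetCard, subset_compl_iff_disjoint_right]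
  simp_rw [ringLaw, ← ite_and]
  rw [← sum_filter, hset, sum_const, card_powersetCard, card_compl, Fintype.card_fin,
    nsmul_eq_mul, avoidProb, div_eq_mul_inv]

lemma sum_ringLaw_inter_nonempty {P k : ℕ} (hk : k ≤ P) (A : Finset (Fin P)) :
    ∑ S, (if (S ∩ A).Nonempty then ringLaw P k S else 0) = pEdge P #A k := by
  rw [pEdge, ← sum_ringLaw hk, ← sum_ringLaw_disjoint, ← sum_sub_distrib]
  refine Fintype.sum_congr _ _ fun S => ?_
  by_cases h : Disjoint S A <;> simp [← not_disjoint_iff_nonempty_inter, h]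

end KeyRings

section Channels

open Finset

variable {ι : Type*} [DecidableEq ι]

/-- The law of the state of the channel `e`: Bernoulli(`α`), except that diagonal channels are
off. -/
noncomputable def channelLaw (α : ℝ) (e : Sym2 ι) (on : Bool) : ℝ :=
  if e.IsDiag then (if on then 0 else 1) else (if on then α else 1 - α)

lemma channelLaw_true_of_not_isDiag (α : ℝ) {e : Sym2 ι} (he : ¬ e.IsDiag) :
    channelLaw α e true = α := by
  simp [channelLaw, he]

lemma sum_channelLaw (α : ℝ) (e : Sym2 ι) : ∑ on, channelLaw α e on = 1 := by
  by_cases he : e.IsDiag <;> simp [channelLaw, he]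

variable [Fintype ι]

lemma indepProb_channelLaw_forall_mem (α : ℝ) {E : Finset (Sym2 ι)} (hE : ∀ e ∈ E, ¬ e.IsDiag) :
    indepProb (channelLaw α) (fun χ => ∀ e ∈ E, χ e = true) = α ^ #E := by
  rw [indepProb_forall (channelLaw α) fun e on => e ∈ E → on = true, ← prod_const,
    ← univ_inter E, ← prod_ite_mem]
  refine Fintype.prod_congr _ _ fun e => ?_
  by_cases he : e ∈ E
  · simp [he, channelLaw_true_of_not_isDiag α (hE e he)]
  · simpa [he] using sum_channelLaw α e

lemma indepProb_channelLaw_forest (α : ℝ) {A B : Finset ι} {p : ι → ι}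
    (hp : IsRootedForest A B p) :
    indepProb (channelLaw α) (fun χ => ∀ v ∈ B, χ s(v, p v) = true) = α ^ #B := by
  have hloopless : ∀ e ∈ B.image fun v => s(v, p v), ¬ e.IsDiag := by
    simp only [forall_mem_image, Sym2.mk_isDiag_iff]
    exact fun v hv => (hp.parent_ne hv).symm
  rw [← card_image_of_injOn hp.injOn_edge, ← indepProb_channelLaw_forall_mem α hloopless]
  simp only [forall_mem_image]

end Channels

section RandomGraph

open Finset

variable {n r P : ℕ} {μ : Fin (r + 1) → ℝ} {K : Fin (r + 1) → ℕ} {α : ℝ}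

lemma wt_nonneg (hμ : ∀ i, 0 ≤ μ i) (hα : α ∈ Set.Icc 0 1) (c : Config n r P) :
    0 ≤ wt μ K α c := by
  have hα0 := hα.1
  have hα1 : 0 ≤ 1 - α := sub_nonneg.mpr hα.2
  refine mul_nonneg (mul_nonneg (prod_nonneg fun x _ => hμ _) (prod_nonneg fun x _ => ?_))
    (prod_nonneg fun e _ => ?_)
  · positivity
  · split_ifs <;> positivity

lemma pr_le_sum_pr_of_imp {κ : Type*} (hμ : ∀ i, 0 ≤ μ i) (hα : α ∈ Set.Icc 0 1) (F : Finset κ)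
    {E : Config n r P → Prop} {E' : κ → Config n r P → Prop}
    (h : ∀ c, E c → ∃ k ∈ F, E' k c) : pr μ K α E ≤ ∑ k ∈ F, pr μ K α (E' k) := by
  classical
  unfold pr
  rw [sum_comm]
  refine sum_le_sum fun c _ => ?_
  have hnonneg : ∀ k ∈ F, 0 ≤ if E' k c then wt μ K α c else 0 := fun k _ =>
    ite_nonneg (wt_nonneg hμ hα c) le_rfl
  split_ifs with hE
  · obtain ⟨k, hk, hkc⟩ := h c hE
    exact (if_pos hkc).ge.trans (single_le_sum hnonneg hk)
  · exact sum_nonneg hnonneg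

lemma pr_rings_and_channels (μ : Fin (r + 1) → ℝ) (K : Fin (r + 1) → ℕ) (α : ℝ)
    (R : (Fin n → Finset (Fin P)) → Prop) (C : (Sym2 (Fin n) → Bool) → Prop) :
    pr μ K α (fun c : Config n r P => R c.2.1 ∧ C c.2.2) =
      (∑ t : Fin n → Fin (r + 1), (∏ x, μ (t x)) * indepProb (fun x => ringLaw P (K (t x))) R) *
        indepProb (channelLaw α) C := by
  classical
  calc pr μ K α (fun c : Config n r P => R c.2.1 ∧ C c.2.2)
      = ∑ c : Config n r P, (∏ x, μ (c.1 x)) *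
          (if R c.2.1 then ∏ x, ringLaw P (K (c.1 x)) (c.2.1 x) else 0) *
            (if C c.2.2 then ∏ e, channelLaw α e (c.2.2 e) else 0) :=
        Fintype.sum_congr _ _ fun c => by
          by_cases hR : R c.2.1 <;> by_cases hC : C c.2.2 <;>
            simp [hR, hC, wt, ringLaw, channelLaw]
    _ = _ := by
      simp only [Fintype.sum_prod_type, ← mul_sum, ← sum_mul, indepProb]

lemma sum_prod_classes (hμ : ∑ i, μ i = 1) : ∑ t : Fin n → Fin (r + 1), ∏ x, μ (t x) = 1 := by
  rw [← Fintype.prod_sum fun (_ : Fin n) i => μ i]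
  simp [hμ]

lemma sum_prod_classes_mul_le (hμ0 : ∀ i, 0 ≤ μ i) (hμ : ∑ i, μ i = 1)
    {f : (Fin n → Fin (r + 1)) → ℝ} {q : ℝ} (hf : ∀ t, f t ≤ q) :
    ∑ t : Fin n → Fin (r + 1), (∏ x, μ (t x)) * f t ≤ q := by
  calc ∑ t : Fin n → Fin (r + 1), (∏ x, μ (t x)) * f t
      ≤ ∑ t : Fin n → Fin (r + 1), (∏ x, μ (t x)) * q :=
        sum_le_sum fun t _ => mul_le_mul_of_nonneg_left (hf t) (prod_nonneg fun x _ => hμ0 _)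
    _ = q := by rw [← sum_mul, sum_prod_classes hμ, one_mul]

lemma pr_true (hμ : ∑ i, μ i = 1) (hK : ∀ i, K i ≤ P) :
    pr μ K α (fun _ : Config n r P => True) = 1 := by
  have hrings (t : Fin n → Fin (r + 1)) :
      indepProb (fun x => ringLaw P (K (t x))) (fun _ => True) = 1 :=
    indepProb_true fun x => sum_ringLaw (hK (t x))
  simpa only [and_self, hrings, indepProb_true (sum_channelLaw α), mul_one,
    sum_prod_classes hμ] using
      pr_rings_and_channels (n := n) (P := P) μ K α (fun _ => True) fun _ => True

lemma pr_le_one (hμ0 : ∀ i, 0 ≤ μ i) (hμ : ∑ i, μ i = 1) (hα : α ∈ Set.Icc 0 1)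
    (hK : ∀ i, K i ≤ P) (E : Config n r P → Prop) : pr μ K α E ≤ 1 := by
  rw [← pr_true (n := n) (α := α) hμ hK]
  simpa using pr_le_sum_pr_of_imp hμ0 hα {()} (E' := fun _ _ => True) fun _ _ => by simp

lemma graphOf_adj {c : Config n r P} {x y : Fin n} :
    (graphOf c).Adj x y ↔ Adj c x y := by
  rw [graphOf, SimpleGraph.fromRel_adj, inter_comm (c.2.1 y), Sym2.eq_swap (a := y), or_self, Adj]

lemma indepProb_ringLaw_forest_le {k : Fin n → ℕ} {m : ℕ} (hk : ∀ x, k x ≤ m) (hm : m ≤ P)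
    {A B : Finset (Fin n)} {p : Fin n → Fin n} (hp : IsRootedForest A B p) :
    indepProb (fun x => ringLaw P (k x)) (fun σ => ∀ v ∈ B, (σ v ∩ σ (p v)).Nonempty) ≤
      pEdge P m m ^ #B := by
  obtain ⟨ρ, hρ⟩ := hp.exists_rank
  refine indepProb_forest_le (fun _ => ringLaw_nonneg) (fun x => sum_ringLaw ((hk x).trans hm))
    (R := fun S T => (S ∩ T).Nonempty) (pEdge_nonneg P m m) (fun x y S hS => ?_) hρ
  have hpxy : pEdge P #S (k x) ≤ pEdge P m m :=
    pEdge_mono ((card_eq_of_ringLaw_ne_zero hS).trans_le (hk y)) (hk x) hm hm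
  convert hpxy
  convert sum_ringLaw_inter_nonempty ((hk x).trans hm) S

lemma pr_forest_le (hμ0 : ∀ i, 0 ≤ μ i) (hμ : ∑ i, μ i = 1) (hα : 0 ≤ α) {m : ℕ}
    (hK : ∀ i, K i ≤ m) (hm : m ≤ P) {A B : Finset (Fin n)} {p : Fin n → Fin n}
    (hp : IsRootedForest A B p) :
    pr μ K α (fun c : Config n r P => ∀ v ∈ B, (graphOf c).Adj v (p v)) ≤
      (α * pEdge P m m) ^ #B := by
  have hevent : (fun c : Config n r P => ∀ v ∈ B, (graphOf c).Adj v (p v)) = fun c =>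
      (∀ v ∈ B, (c.2.1 v ∩ c.2.1 (p v)).Nonempty) ∧ ∀ v ∈ B, c.2.2 s(v, p v) = true := by
    funext c
    rw [← forall₂_and]
    refine propext (forall₂_congr fun v hv => ?_)
    rw [graphOf_adj, Adj, and_iff_right (hp.parent_ne hv).symm]
  rw [hevent, pr_rings_and_channels μ K α
    (fun σ => ∀ v ∈ B, (σ v ∩ σ (p v)).Nonempty) fun χ => ∀ v ∈ B, χ s(v, p v) = true,
    indepProb_channelLaw_forest α hp, mul_pow, mul_comm]
  refine mul_le_mul_of_nonneg_left ?_ (pow_nonneg hα _)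
  exact sum_prod_classes_mul_le hμ0 hμ fun t =>
    indepProb_ringLaw_forest_le (fun x => hK (t x)) hm hp

end RandomGraph

theorem induced_connected_bound_general {r n P m : ℕ} {μ : Fin (r + 1) → ℝ}
    (hμ0 : ∀ i, 0 ≤ μ i) (hμ : ∑ i, μ i = 1) {K : Fin (r + 1) → ℕ} (hK : ∀ i, K i ≤ m)
    (hm : m ≤ P) {α : ℝ} (hα : α ∈ Set.Icc 0 1) {s : Set (Fin n)} (hs : s.Nonempty) :
    pr μ K α (fun c : Config n r P => ((graphOf c).induce s).Connected) ≤
      min 1 ((s.ncard : ℝ) ^ (s.ncard - 2) * (α * pEdge P m m) ^ (s.ncard - 1)) := by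
  lift s to Finset (Fin n) using s.toFinite
  rw [Set.ncard_coe_finset]
  obtain ⟨o, ho⟩ := hs
  refine le_min (pr_le_one hμ0 hμ hα (fun i => (hK i).trans hm) _) ?_
  calc pr μ K α (fun c : Config n r P => ((graphOf c).induce (s : Set (Fin n))).Connected)
      ≤ ∑ p ∈ rootedForests {o} (s.erase o),
          pr μ K α (fun c : Config n r P => ∀ v ∈ s.erase o, (graphOf c).Adj v (p v)) :=
        pr_le_sum_pr_of_imp hμ0 hα _ fun c hc => by
          obtain ⟨p, hp, hadj⟩ := exists_isRootedForest_of_connected ho hc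
          exact ⟨p, mem_rootedForests.mpr hp, hadj⟩
    _ ≤ ∑ _p ∈ rootedForests {o} (s.erase o), (α * pEdge P m m) ^ (s.erase o).card :=
        Finset.sum_le_sum fun _ hp => pr_forest_le hμ0 hμ hα.1 hK hm (mem_rootedForests.mp hp)
    _ = (s.card : ℝ) ^ (s.card - 2) * (α * pEdge P m m) ^ (s.card - 1) := by
        rw [Finset.sum_const, nsmul_eq_mul, card_rootedForests_singleton_erase ho, Nat.cast_pow,
          Finset.card_erase_of_mem ho]

/-- the probability that the subgraph of `G(n; μ, K, P, α)` induced on the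
first `ℓ` vertices is connected is at most `min{1, ℓ^{ℓ−2} (α p_rr)^{ℓ−1}}`. -/
theorem induced_connected_bound {r : ℕ} (μ : Fin (r + 1) → ℝ)
    (hμpos : ∀ i, 0 < μ i) (hμsum : ∑ i, μ i = 1)
    (K : Fin (r + 1) → ℕ) (P : ℕ) (α : ℝ)
    (hK1 : 1 ≤ K 0) (hKmono : Monotone K) (hKP : 2 * K (Fin.last r) ≤ P)
    (hα : α ∈ Set.Ioo (0 : ℝ) 1)
    (n ℓ : ℕ) (hℓ : 2 ≤ ℓ) (hℓn : ℓ ≤ n) :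
    pr μ K α
        (fun cfg : Config n r P =>
          ((graphOf cfg).induce {x : Fin n | (x : ℕ) < ℓ}).Connected) ≤
      min 1 ((ℓ : ℝ) ^ (ℓ - 2) * (α * pEdge P (K (Fin.last r)) (K (Fin.last r))) ^ (ℓ - 1)) := by
  have hcard : {x : Fin n | (x : ℕ) < ℓ}.ncard = ℓ := by
    rw [Set.ncard_eq_toFinset_card', Set.toFinset_ofPred, Fin.card_filter_val_lt, min_eq_right hℓn]
  simpa only [hcard] using induced_connected_bound_general (K := K) (fun i => (hμpos i).le) hμsum
    (fun i => hKmono (Fin.le_last i)) (by lia) (Set.Ioo_subset_Icc_self hα)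
    (s := {x : Fin n | (x : ℕ) < ℓ}) ⟨⟨0, by lia⟩, by simp; lia⟩
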